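/- Let d, g, m be natural numbers with d ≥ 1, g ≥ 2d and m ≤ 2g−2. The function z ↦ Z_{g,m}(z)·(2z/(1+4z) − 4z/(√(1+4z)·(√(1+4z)+1))), where Z_{g,m}(z) = (2/(√(1+4z)+1))^{2g−2−m}·(1+4z)^{(g−1)/2} for real z ∈ (−1/4,1/4), is real-analytic at 0, and its d-th Taylor coefficient at 0 equals [2·(g−2)!·(2g−2−m)! / ((g−2d)!·(d−1)!·(2g−3−m+d)!)] · Σ_{k=0}^{d−1} [(−g/2+m/2+1−d)_k · (−g/2+(m+3)/2−d)_k · (1−d)_k]/[((g+1)/2−d)_k · (g/2+1−d)_k · k!] − [2·(g−1)!·(2g−1−m)! / ((g+1−2d)!·(d−1)!·(2g−2−m+d)!)] · Σ_{k=0}^{d−1} [(−g/2+m/2+1−d)_k · (−g/2+(m+3)/2−d)_k · (1−d)_k]/[(g/2+1−d)_k · ((g+3)/2−d)_k · k!], where (x)_k = x(x+1)⋯(x+k−1) denotes the rising factorial. -/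

import Mathlib

/-- The generating function `Z_{g,m}(z) = (2/(√(1+4z)+1))^{2g−2−m} · (1+4z)^{(g−1)/2}`. -/
noncomputable def Zgen (g m : ℝ) (z : ℝ) : ℝ :=
  (2 / (Real.sqrt (1 + 4 * z) + 1)) ^ (2 * g - 2 - m) * (1 + 4 * z) ^ ((g - 1) / 2)

lemma sqrt_an : AnalyticAt ℝ (fun z : ℝ => Real.sqrt (1 + 4 * z)) 0 := by
  apply ContDiffAt.analyticAt
  apply ContDiffAt.sqrt
  · fun_prop
  · norm_num

/-- `t^s u^(H-1)` with `u = √(1+4z)`, `t = 2/(u+1)`. -/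
noncomputable def FF (s H : ℤ) (z : ℝ) : ℝ :=
  (2 / (Real.sqrt (1 + 4 * z) + 1)) ^ s * (Real.sqrt (1 + 4 * z)) ^ (H - 1)

lemma FF_an (s H : ℤ) : AnalyticAt ℝ (FF s H) 0 := by
  have h1 : AnalyticAt ℝ (fun z : ℝ => 2 / (Real.sqrt (1 + 4 * z) + 1)) 0 :=
    analyticAt_const.div (sqrt_an.add analyticAt_const) (by norm_num)
  have h2 := h1.zpow (n := s) (by norm_num)
  have h3 := sqrt_an.zpow (n := H - 1) (by norm_num)
  exact h2.mul h3

lemma ev_pos : ∀ᶠ z : ℝ in nhds 0, 0 < 1 + 4 * z := by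
  have : Filter.Tendsto (fun z : ℝ => 1 + 4 * z) (nhds 0) (nhds (1 + 4 * 0)) :=
    Continuous.tendsto (by fun_prop) 0
  exact this.eventually (lt_mem_nhds (by norm_num))

lemma FF_deriv (s H : ℤ) (z : ℝ) (hz : 0 < 1 + 4 * z) :
    HasDerivAt (FF s H) (-(s : ℝ) * FF (s + 1) (H - 1) z + 2 * ((H : ℝ) - 1) * FF s (H - 2) z) z := by
  have hu : 0 < Real.sqrt (1 + 4 * z) := Real.sqrt_pos.2 hz
  have h0 : HasDerivAt (fun z : ℝ => 1 + 4 * z) 4 z := by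
    simpa using ((hasDerivAt_id z).const_mul 4).const_add 1
  have h1 := h0.sqrt hz.ne'
  have h2 : HasDerivAt (fun z : ℝ => 2 / (Real.sqrt (1 + 4 * z) + 1)) _ z :=
    (hasDerivAt_const z (2 : ℝ)).div (h1.add_const 1) (by positivity)
  have ht : 0 < 2 / (Real.sqrt (1 + 4 * z) + 1) := by positivity
  have h3 := (hasDerivAt_zpow s _ (Or.inl ht.ne')).comp z h2
  have h4 := (hasDerivAt_zpow (H - 1) _ (Or.inl hu.ne')).comp z h1
  have h5 := h3.mul h4
  refine h5.congr_deriv ?_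
  simp only [FF, Function.comp]
  set u := Real.sqrt (1 + 4 * z) with hudef
  have e1 : (2 / (u + 1)) ^ (s - 1) = (2 / (u + 1)) ^ s / (2 / (u + 1)) := zpow_sub_one₀ ht.ne' s
  have e2 : (2 / (u + 1)) ^ (s + 1) = (2 / (u + 1)) ^ s * (2 / (u + 1)) := zpow_add_one₀ ht.ne' s
  have e3 : u ^ (H - 1 - 1) = u ^ (H - 1) / u := zpow_sub_one₀ hu.ne' _
  have e4 : u ^ (H - 2 - 1) = u ^ (H - 1) / u / u := by
    rw [div_eq_mul_inv, div_eq_mul_inv, ← zpow_sub_one₀ hu.ne', ← zpow_sub_one₀ hu.ne']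
    congr 1; ring
  rw [e1, e2, e3, e4]
  push_cast
  generalize (2 / (u + 1)) ^ s = T
  generalize u ^ (H - 1) = U
  field_simp
  ring

lemma FF_ode (s H : ℤ) (z : ℝ) (hz : 0 < 1 + 4 * z) :
    deriv (FF s H) z = (-((s : ℝ) + 1) * FF (s + 2) H z + 2 * (H : ℝ) * FF (s + 1) (H - 1) z)
      - deriv (fun z => z * FF (s + 2) H z) z := by
  have hu : 0 < Real.sqrt (1 + 4 * z) := Real.sqrt_pos.2 hz
  have hsq : Real.sqrt (1 + 4 * z) ^ 2 = 1 + 4 * z := Real.sq_sqrt hz.le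
  have ht : 0 < 2 / (Real.sqrt (1 + 4 * z) + 1) := by positivity
  rw [(FF_deriv s H z hz).deriv]
  have := ((hasDerivAt_id z).mul (FF_deriv (s + 2) H z hz)).deriv
  simp only [id] at this
  have h' : deriv (fun z => z * FF (s + 2) H z) z = _ := this
  rw [h']
  simp only [FF]
  set u := Real.sqrt (1 + 4 * z) with hudef
  have e2 : (2 / (u + 1)) ^ (s + 1) = (2 / (u + 1)) ^ s * (2 / (u + 1)) := zpow_add_one₀ ht.ne' s
  have e5 : (2 / (u + 1)) ^ (s + 2) = (2 / (u + 1)) ^ s * (2 / (u + 1)) * (2 / (u + 1)) := by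
    rw [← zpow_add_one₀ ht.ne', ← zpow_add_one₀ ht.ne']; congr 1; ring
  have e6 : (2 / (u + 1)) ^ (s + 2 + 1) =
      (2 / (u + 1)) ^ s * (2 / (u + 1)) * (2 / (u + 1)) * (2 / (u + 1)) := by
    rw [← zpow_add_one₀ ht.ne', ← zpow_add_one₀ ht.ne', ← zpow_add_one₀ ht.ne']; congr 1; ring
  have e3 : u ^ (H - 1 - 1) = u ^ (H - 1) / u := zpow_sub_one₀ hu.ne' _
  have e4 : u ^ (H - 2 - 1) = u ^ (H - 1) / u / u := by
    rw [div_eq_mul_inv, div_eq_mul_inv, ← zpow_sub_one₀ hu.ne', ← zpow_sub_one₀ hu.ne']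
    congr 1; ring
  rw [e2, e3, e4, e5, e6]
  push_cast
  generalize (2 / (u + 1)) ^ s = T
  generalize u ^ (H - 1) = U
  have hz' : z = (u ^ 2 - 1) / 4 := by linarith
  rw [hz']
  field_simp
  ring

lemma iter_zmul (n : ℕ) (f : ℝ → ℝ) (hf : AnalyticAt ℝ f 0) :
    iteratedDeriv (n + 1) (fun z => z * f z) 0 = (n + 1) * iteratedDeriv n f 0 := by
  rw [iteratedDeriv_fun_mul (f := fun z : ℝ => z) contDiffAt_fun_id hf.contDiffAt]
  rw [Finset.sum_eq_single 1]
  · simp [iteratedDeriv_fun_id]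
  · intro b _ hb
    simp only [iteratedDeriv_fun_id]
    simp [hb]
  · simp

lemma FF_rec (n : ℕ) (s H : ℤ) :
    iteratedDeriv (n + 1) (FF s H) 0 = -((s : ℝ) + n + 2) * iteratedDeriv n (FF (s + 2) H) 0
      + 2 * (H : ℝ) * iteratedDeriv n (FF (s + 1) (H - 1)) 0 := by
  have h1 : deriv (FF s H) =ᶠ[nhds 0]
      ((fun z => -((s : ℝ) + 1) * FF (s + 2) H z) + (fun z => 2 * (H : ℝ) * FF (s + 1) (H - 1) z))
      - deriv (fun z => z * FF (s + 2) H z) := by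
    filter_upwards [ev_pos] with z hz
    exact FF_ode s H z hz
  have a1 := FF_an (s + 2) H
  have a2 := FF_an (s + 1) (H - 1)
  have a3 : AnalyticAt ℝ (fun z => z * FF (s + 2) H z) 0 := analyticAt_id.mul a1
  have b1 : AnalyticAt ℝ (fun z => -((s : ℝ) + 1) * FF (s + 2) H z) 0 := analyticAt_const.mul a1
  have b2 : AnalyticAt ℝ (fun z => 2 * (H : ℝ) * FF (s + 1) (H - 1) z) 0 := analyticAt_const.mul a2
  rw [iteratedDeriv_succ', h1.iteratedDeriv_eq, iteratedDeriv_sub (b1.add b2).contDiffAt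
    a3.deriv.contDiffAt, iteratedDeriv_add b1.contDiffAt b2.contDiffAt,
    iteratedDeriv_const_mul _ a1.contDiffAt, iteratedDeriv_const_mul _ a2.contDiffAt,
    ← iteratedDeriv_succ', iter_zmul n _ a1]
  ring

/-- falling factorial -/
noncomputable def ff (x : ℝ) (n : ℕ) : ℝ := ∏ i ∈ Finset.range n, (x - i)

lemma ff_zero (x : ℝ) : ff x 0 = 1 := by simp [ff]
lemma ff_succ (x : ℝ) (n : ℕ) : ff x (n + 1) = ff x n * (x - n) := by
  simp [ff, Finset.prod_range_succ]
lemma ff_succ' (x : ℝ) (n : ℕ) : ff x (n + 1) = x * ff (x - 1) n := by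
  simp only [ff, Finset.prod_range_succ']
  push_cast
  rw [mul_comm]
  congr 1
  · simp
  · apply Finset.prod_congr rfl; intros; ring

noncomputable def SS (n : ℕ) (H c : ℝ) : ℝ :=
  ∑ j ∈ Finset.range (n + 1), (n.choose j : ℝ) * ((-1) ^ j * ff H (2 * j) * ff (H + c - 2 * j) (2 * (n - j)))

lemma sum_pascal (n : ℕ) (f : ℕ → ℝ) :
    ∑ j ∈ Finset.range (n + 2), ((n + 1).choose j : ℝ) * f j =
      ∑ j ∈ Finset.range (n + 1), (n.choose j : ℝ) * (f j + f (j + 1)) := by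
  rw [Finset.sum_range_succ']
  simp only [Nat.choose_succ_succ, Nat.cast_add, add_mul, mul_add, Finset.sum_add_distrib]
  have : ∑ j ∈ Finset.range (n + 1), (n.choose j : ℝ) * f j =
      ∑ j ∈ Finset.range (n + 1), (n.choose (j + 1) : ℝ) * f (j + 1) + (n.choose 0 : ℝ) * f 0 := by
    rw [← Finset.sum_range_succ' (fun j => (n.choose j : ℝ) * f j), Finset.sum_range_succ _ (n + 1)]
    simp
  rw [this]
  simp
  ring

lemma SS_rec (n : ℕ) (H c : ℝ) :
    SS (n + 1) H c = c * (c - 1) * SS n H (c - 2) + 2 * c * H * SS n (H - 1) (c - 1) := by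
  unfold SS
  rw [sum_pascal, Finset.mul_sum, Finset.mul_sum, ← Finset.sum_add_distrib]
  apply Finset.sum_congr rfl
  intro j hj
  have hj' : j ≤ n := by simpa [Nat.lt_succ_iff] using hj
  obtain ⟨k, rfl⟩ := Nat.exists_eq_add_of_le hj'
  have i1 : 2 * (j + k + 1 - j) = 2 * k + 1 + 1 := by omega
  have i2 : 2 * (j + k + 1 - (j + 1)) = 2 * k := by omega
  have i3 : 2 * (j + k - j) = 2 * k := by omega
  have i4 : 2 * (j + 1) = 2 * j + 1 + 1 := by ring
  rw [i1, i2, i3, i4, ff_succ', ff_succ' _ (2 * k)]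
  have k1 : H * ff (H - 1) (2 * j) = ff H (2 * j) * (H - 2 * j) := by
    rw [← ff_succ', ff_succ]; push_cast; ring
  rw [ff_succ H, ff_succ H]
  have k2 : H + c - 2 * (j : ℝ) - 1 - 1 = H + c - 2 * (j : ℝ) - 2 := by ring
  have k3 : H + c - 2 * ((j + 1 : ℕ) : ℝ) = H + c - 2 * (j : ℝ) - 2 := by push_cast; ring
  have k4 : H + (c - 2) - 2 * (j : ℝ) = H + c - 2 * (j : ℝ) - 2 := by ring
  have k5 : H - 1 + (c - 1) - 2 * (j : ℝ) = H + c - 2 * (j : ℝ) - 2 := by ring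
  rw [k2, k3, k4, k5]
  push_cast
  generalize ff (H + c - 2 * (j : ℝ) - 2) (2 * k) = X
  have : 2 * c * H * (((j + k).choose j : ℝ) * ((-1) ^ j * ff (H - 1) (2 * j) * X)) =
    2 * c * (((j + k).choose j : ℝ) * ((-1) ^ j * (H * ff (H - 1) (2 * j)) * X)) := by ring
  rw [this, k1]
  ring

noncomputable abbrev asc (x : ℝ) (k : ℕ) : ℝ := (ascPochhammer ℝ k).eval x

lemma asc_succ (x : ℝ) (k : ℕ) : asc x (k + 1) = asc x k * (x + k) := ascPochhammer_succ_eval k x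
lemma asc_succ' (x : ℝ) (k : ℕ) : asc x (k + 1) = x * asc (x + 1) k := by
  simp [asc, ascPochhammer_succ_left, Polynomial.eval_comp]
lemma asc_zero (x : ℝ) : asc x 0 = 1 := by simp [asc]

lemma FF_SS (n : ℕ) : ∀ (s : ℕ) (H : ℤ),
    (-1) ^ n * asc ((s : ℝ) + 1) n * iteratedDeriv n (FF s H) 0 = SS n H (-(s : ℝ) - 1) := by
  induction n with
  | zero =>
    intro s H
    simp [SS, ff_zero, FF, asc]
    norm_num
  | succ n ih =>
    intro s H
    rw [FF_rec, SS_rec]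
    have h1 := ih (s + 2) H
    have h2 := ih (s + 1) (H - 1)
    push_cast at h1 h2
    have g1 : -((s : ℝ) + 2) - 1 = -s - 1 - 2 := by ring
    have g2 : -((s : ℝ) + 1) - 1 = -s - 1 - 1 := by ring
    rw [g1] at h1
    rw [g2] at h2
    rw [← h1, ← h2, asc_succ']
    have k1 : ((s : ℝ) + 2) * asc ((s : ℝ) + 2 + 1) n = asc ((s : ℝ) + 1 + 1) n * (s + n + 2) := by
      have := asc_succ' ((s : ℝ) + 2) n
      rw [asc_succ] at this
      have e : (s : ℝ) + 1 + 1 = s + 2 := by ring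
      rw [e, ← this]; ring
    push_cast
    linear_combination (-(1 : ℝ)) ^ n * (s + 1) * (iteratedDeriv n (FF (s + 2) H) 0) * (-k1)

lemma asc_dup (x : ℝ) (k : ℕ) : asc (x / 2) k * asc ((x + 1) / 2) k * 4 ^ k = asc x (2 * k) := by
  induction k with
  | zero => simp [asc]
  | succ k ih =>
    rw [show 2 * (k + 1) = 2 * k + 1 + 1 by ring, asc_succ, asc_succ, asc_succ x, asc_succ x, ← ih]
    push_cast
    ring

lemma asc_ff (x : ℝ) (k : ℕ) : asc x k = ff (x + k - 1) k := by
  induction k generalizing x with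
  | zero => simp [ff_zero, asc]
  | succ k ih =>
    rw [asc_succ', ff_succ, ih]
    push_cast
    rw [show x + 1 + (k : ℝ) - 1 = x + (k + 1) - 1 by ring]
    ring

lemma asc_fact (n k : ℕ) : asc ((n : ℝ) + 1) k * n.factorial = ((n + k).factorial : ℝ) := by
  induction k with
  | zero => simp [asc]
  | succ k ih =>
    rw [asc_succ, ← add_assoc, Nat.factorial_succ]
    push_cast
    rw [← ih]; ring

lemma ff_fact (n k : ℕ) : ff ((n : ℝ) + k) k * n.factorial = ((n + k).factorial : ℝ) := by
  rw [← asc_fact, asc_ff]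
  congr 2
  ring

lemma asc_neg (j k : ℕ) : asc (-((j : ℝ) + k)) k / k.factorial = (-1) ^ k * ((j + k).choose j : ℝ) := by
  have h1 : asc (-((j : ℝ) + k)) k = (-1) ^ k * asc ((j : ℝ) + 1) k := by
    induction k generalizing j with
    | zero => simp [asc]
    | succ k ih =>
      rw [asc_succ, asc_succ']
      have := ih (j + 1)
      push_cast at this ⊢
      rw [show -((j : ℝ) + (k + 1)) = -(j + 1 + k) by ring, this]
      ring
  rw [h1, Nat.choose_symm_add, Nat.add_choose, Nat.cast_div (Nat.factorial_mul_factorial_dvd_factorial_add j k) (by positivity),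
    ← asc_fact]
  push_cast
  field_simp

/-- The key lemma. -/
lemma key (n H s : ℕ) (hH : 2 * n ≤ H) :
    iteratedDeriv n (FF s H) 0 / n.factorial =
      ((H.factorial : ℝ) * s.factorial / ((H - 2 * n).factorial * n.factorial * (s + n).factorial)) *
      ∑ k ∈ Finset.range (n + 1),
        (asc (((H : ℝ) - s - 2 * n) / 2) k * asc (((H : ℝ) - s - 2 * n + 1) / 2) k * asc (-(n : ℝ)) k) /
        (asc (((H : ℝ) - 2 * n + 1) / 2) k * asc (((H : ℝ) - 2 * n + 1 + 1) / 2) k * k.factorial) := by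
  have h := FF_SS n s H
  have hA : asc ((s : ℝ) + 1) n ≠ 0 := by
    have := asc_fact s n
    intro h0
    rw [h0, zero_mul] at this
    have : ((s + n).factorial : ℝ) ≠ 0 := by positivity
    simp_all
  have hm : ((-1 : ℝ) ^ n) * (-1) ^ n = 1 := by rw [← mul_pow]; simp
  have h' : iteratedDeriv n (FF s H) 0 = (-1) ^ n * SS n H (-(s : ℝ) - 1) / asc ((s : ℝ) + 1) n := by
    rw [eq_div_iff hA]
    push_cast at h
    rw [← h]
    linear_combination (-(asc ((s : ℝ) + 1) n * iteratedDeriv n (FF s H) 0)) * hm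
  rw [h', ← asc_fact]
  have main : (-1) ^ n * SS n H (-(s : ℝ) - 1) = (H.factorial : ℝ) / (H - 2 * n).factorial *
      ∑ k ∈ Finset.range (n + 1),
        (asc (((H : ℝ) - s - 2 * n) / 2) k * asc (((H : ℝ) - s - 2 * n + 1) / 2) k * asc (-(n : ℝ)) k) /
        (asc (((H : ℝ) - 2 * n + 1) / 2) k * asc (((H : ℝ) - 2 * n + 1 + 1) / 2) k * k.factorial) := by
    unfold SS
    rw [← Finset.sum_flip, Finset.mul_sum, Finset.mul_sum]
    apply Finset.sum_congr rfl
    intro k hk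
    have hk' : k ≤ n := by simpa [Nat.lt_succ_iff] using hk
    obtain ⟨j, rfl⟩ := Nat.exists_eq_add_of_le' hk'
    obtain ⟨L, rfl⟩ := Nat.exists_eq_add_of_le' hH
    have i1 : j + k - k = j := by omega
    have i2 : j + k - j = k := by omega
    have i3 : L + 2 * (j + k) - 2 * (j + k) = L := by omega
    rw [i1, i2, i3]
    push_cast
    have e1 := asc_dup ((L : ℝ) + 2 * (j + k) - s - 2 * (j + k)) k
    have e2 := asc_dup ((L : ℝ) + 2 * (j + k) - 2 * (j + k) + 1) k
    have e3 := asc_neg j k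
    have e4 := asc_fact L (2 * k)
    have e5 := ff_fact (L + 2 * k) (2 * j)
    rw [asc_ff _ (2 * k)] at e1
    push_cast at e1 e5
    rw [show (L : ℝ) + 2 * (j + k) - s - 2 * (j + k) + 2 * k - 1 =
      (L : ℝ) + 2 * (j + k) + (-s - 1) - 2 * j by ring] at e1
    rw [show (L : ℝ) + 2 * (j + k) - 2 * (j + k) + 1 = L + 1 by ring] at e2 ⊢
    rw [show (L : ℝ) + 2 * k + 2 * j = L + 2 * (j + k) by ring,
      show L + 2 * k + 2 * j = L + 2 * (j + k) by ring, ← e4, ← e2] at e5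
    have hne : asc (((L : ℝ) + 1) / 2) k * asc (((L : ℝ) + 1 + 1) / 2) k ≠ 0 := by
      intro h0
      rw [← e2, h0, zero_mul, zero_mul] at e4
      have : ((L + 2 * k).factorial : ℝ) ≠ 0 := by positivity
      exact this e4.symm
    rw [← e1, ← e5]
    have e3' : asc (-((j : ℝ) + k)) k = (-1) ^ k * ((j + k).choose j : ℝ) * k.factorial := by
      rw [← e3]; field_simp
    rw [e3']
    have hj2 : ((-1 : ℝ) ^ j) * (-1) ^ j = 1 := by rw [← mul_pow]; simp
    generalize asc (((L : ℝ) + 1) / 2) k = A at *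
    generalize asc (((L : ℝ) + 1 + 1) / 2) k = B at *
    have hA := left_ne_zero_of_mul hne
    have hB := right_ne_zero_of_mul hne
    rw [pow_add]
    field_simp
    linear_combination (((j + k).choose j : ℝ) * ff ((L : ℝ) + 2 * (j + k)) (2 * j) *
      asc (((L : ℝ) + 2 * (j + k) - s - 2 * (j + k)) / 2) k *
      asc (((L : ℝ) + 2 * (j + k) - s - 2 * (j + k) + 1) / 2) k) * hj2
  rw [main]
  field_simp

theorem taylor_coeff_Pbeta (d g m : ℕ) (hd : 1 ≤ d) (hg : 2 * d ≤ g) (hm : m + 2 ≤ 2 * g) :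
    AnalyticAt ℝ (fun z => Zgen g m z *
      (2 * z / (1 + 4 * z)
        - 4 * z / (Real.sqrt (1 + 4 * z) * (Real.sqrt (1 + 4 * z) + 1)))) 0 ∧
    iteratedDeriv d (fun z => Zgen g m z *
        (2 * z / (1 + 4 * z)
          - 4 * z / (Real.sqrt (1 + 4 * z) * (Real.sqrt (1 + 4 * z) + 1)))) 0
        / (d.factorial : ℝ) =
      2 * ((g - 2).factorial : ℝ) * ((2 * g - 2 - m).factorial : ℝ)
          / (((g - 2 * d).factorial : ℝ) * ((d - 1).factorial : ℝ)
              * ((2 * g - 2 - m + d - 1).factorial : ℝ))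
        * ∑ k ∈ Finset.range d,
            ((ascPochhammer ℝ k).eval (-(g : ℝ) / 2 + (m : ℝ) / 2 + 1 - d)
                * (ascPochhammer ℝ k).eval (-(g : ℝ) / 2 + ((m : ℝ) + 3) / 2 - d)
                * (ascPochhammer ℝ k).eval (1 - (d : ℝ)))
              / ((ascPochhammer ℝ k).eval (((g : ℝ) + 1) / 2 - d)
                  * (ascPochhammer ℝ k).eval ((g : ℝ) / 2 + 1 - d)
                  * (k.factorial : ℝ))
      - 2 * ((g - 1).factorial : ℝ) * ((2 * g - 1 - m).factorial : ℝ)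
          / (((g + 1 - 2 * d).factorial : ℝ) * ((d - 1).factorial : ℝ)
              * ((2 * g - 2 - m + d).factorial : ℝ))
        * ∑ k ∈ Finset.range d,
            ((ascPochhammer ℝ k).eval (-(g : ℝ) / 2 + (m : ℝ) / 2 + 1 - d)
                * (ascPochhammer ℝ k).eval (-(g : ℝ) / 2 + ((m : ℝ) + 3) / 2 - d)
                * (ascPochhammer ℝ k).eval (1 - (d : ℝ)))
              / ((ascPochhammer ℝ k).eval ((g : ℝ) / 2 + 1 - d)
                  * (ascPochhammer ℝ k).eval (((g : ℝ) + 3) / 2 - d)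
                  * (k.factorial : ℝ)) := by
  obtain ⟨n, rfl⟩ := Nat.exists_eq_add_of_le' hd
  obtain ⟨L, rfl⟩ := Nat.exists_eq_add_of_le' hg
  obtain ⟨s, hs⟩ := Nat.exists_eq_add_of_le' hm
  set G : ℕ := L + 2 * n with hG
  have hgG : L + 2 * (n + 1) = G + 2 := by omega
  have i1 : 2 * (G + 2) - 2 - m = s := by omega
  have i2 : 2 * (G + 2) - 1 - m = s + 1 := by omega
  have i3 : s + (n + 1) - 1 = s + n := by omega
  have i4 : s + (n + 1) = s + 1 + n := by omega
  have i5 : G + 2 - 2 * (n + 1) = G - 2 * n := by omega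
  have i6 : G + 2 + 1 - 2 * (n + 1) = G + 1 - 2 * n := by omega
  have i7 : G + 2 - 2 = G := by omega
  have i8 : G + 2 - 1 = G + 1 := by omega
  have i9 : n + 1 - 1 = n := by omega
  rw [hgG, i1, i2, i3, i4, i5, i6, i7, i8, i9]
  rw [hgG] at hs
  have hsR : (m : ℝ) = 2 * G + 2 - s := by
    have : ((2 * (G + 2) : ℕ) : ℝ) = ((s + (m + 2) : ℕ) : ℝ) := by rw [hs]
    push_cast at this
    linarith
  have hev : (fun z => Zgen (G + 2 : ℕ) m z *
      (2 * z / (1 + 4 * z)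
        - 4 * z / (Real.sqrt (1 + 4 * z) * (Real.sqrt (1 + 4 * z) + 1)))) =ᶠ[nhds 0]
      (fun z => z * (2 * (FF (s : ℕ) (G : ℕ) z - FF (s + 1 : ℕ) (G + 1 : ℕ) z))) := by
    filter_upwards [ev_pos] with z hz
    have hu : 0 < Real.sqrt (1 + 4 * z) := Real.sqrt_pos.2 hz
    have hsq : Real.sqrt (1 + 4 * z) ^ 2 = 1 + 4 * z := Real.sq_sqrt hz.le
    unfold Zgen FF
    have e1 : (2 : ℝ) * (G + 2 : ℕ) - 2 - m = (s : ℕ) := by rw [hsR]; push_cast; ring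
    have e2 : (1 + 4 * z) ^ ((((G + 2 : ℕ) : ℝ) - 1) / 2) = Real.sqrt (1 + 4 * z) ^ (G + 1) := by
      rw [Real.sqrt_eq_rpow, ← Real.rpow_natCast, ← Real.rpow_mul hz.le]
      congr 1; push_cast; ring
    rw [e1, Real.rpow_natCast, e2]
    have e3 : (4 : ℝ) * z = Real.sqrt (1 + 4 * z) ^ 2 - 1 := by rw [hsq]; ring
    have e4 : Real.sqrt (1 + 4 * z) ^ ((G : ℕ) - 1 : ℤ) = Real.sqrt (1 + 4 * z) ^ G / Real.sqrt (1 + 4 * z) := by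
      rw [zpow_sub_one₀ hu.ne', zpow_natCast, div_eq_mul_inv]
    have e5 : Real.sqrt (1 + 4 * z) ^ ((G + 1 : ℕ) - 1 : ℤ) = Real.sqrt (1 + 4 * z) ^ G := by
      push_cast; rw [add_sub_cancel_right, zpow_natCast]
    rw [e4, e5, zpow_natCast, zpow_natCast, pow_succ _ G, pow_succ _ s]
    rw [show 2 * z / (1 + 4 * z) = 2 * z / Real.sqrt (1 + 4 * z) ^ 2 by rw [hsq]]
    generalize Real.sqrt (1 + 4 * z) = u at *
    generalize (2 / (u + 1)) ^ s = T
    generalize u ^ G = U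
    field_simp
    ring
  have a1 := FF_an (s : ℕ) (G : ℕ)
  have a2 := FF_an (s + 1 : ℕ) (G + 1 : ℕ)
  have a3 : AnalyticAt ℝ (fun z => 2 * (FF (s : ℕ) (G : ℕ) z - FF (s + 1 : ℕ) (G + 1 : ℕ) z)) 0 :=
    analyticAt_const.mul (a1.sub a2)
  have a4 : AnalyticAt ℝ (fun z => z * (2 * (FF (s : ℕ) (G : ℕ) z - FF (s + 1 : ℕ) (G + 1 : ℕ) z))) 0 :=
    analyticAt_id.mul a3
  refine ⟨a4.congr hev.symm, ?_⟩
  have hc : iteratedDeriv n (fun z => 2 * (FF (s : ℕ) (G : ℕ) z - FF (s + 1 : ℕ) (G + 1 : ℕ) z)) 0 =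
      2 * iteratedDeriv n (FF (s : ℕ) (G : ℕ) - FF (s + 1 : ℕ) (G + 1 : ℕ)) 0 :=
    iteratedDeriv_const_mul (f := FF (s : ℕ) (G : ℕ) - FF (s + 1 : ℕ) (G + 1 : ℕ)) 2
      (a1.sub a2).contDiffAt
  rw [hev.iteratedDeriv_eq, iter_zmul n _ a3, hc, iteratedDeriv_sub a1.contDiffAt a2.contDiffAt]
  have k1 := key n G s (by omega)
  have k2 := key n (G + 1) (s + 1) (by omega)
  have q1 : -((G + 2 : ℕ) : ℝ) / 2 + (m : ℝ) / 2 + 1 - ((n + 1 : ℕ) : ℝ) = ((G : ℝ) - s - 2 * n) / 2 := by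
    rw [hsR]; push_cast; ring
  have q2 : -((G + 2 : ℕ) : ℝ) / 2 + ((m : ℝ) + 3) / 2 - ((n + 1 : ℕ) : ℝ) = ((G : ℝ) - s - 2 * n + 1) / 2 := by
    rw [hsR]; push_cast; ring
  have q3 : 1 - ((n + 1 : ℕ) : ℝ) = -(n : ℝ) := by push_cast; ring
  have q4 : (((G + 2 : ℕ) : ℝ) + 1) / 2 - ((n + 1 : ℕ) : ℝ) = ((G : ℝ) - 2 * n + 1) / 2 := by
    push_cast; ring
  have q5 : ((G + 2 : ℕ) : ℝ) / 2 + 1 - ((n + 1 : ℕ) : ℝ) = ((G : ℝ) - 2 * n + 1 + 1) / 2 := by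
    push_cast; ring
  have q6 : (((G + 2 : ℕ) : ℝ) + 3) / 2 - ((n + 1 : ℕ) : ℝ) = ((G : ℝ) - 2 * n + 1 + 1 + 1) / 2 := by
    push_cast; ring
  rw [q1, q2, q3, q4, q5, q6]
  have r1 : ((G + 1 : ℕ) : ℝ) - ((s + 1 : ℕ) : ℝ) - 2 * n = (G : ℝ) - s - 2 * n := by push_cast; ring
  have r2 : ((G + 1 : ℕ) : ℝ) - 2 * n + 1 = (G : ℝ) - 2 * n + 1 + 1 := by push_cast; ring
  rw [r1, r2] at k2
  simp only [asc] at k1 k2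
  have hfac : (((n + 1).factorial : ℕ) : ℝ) = (n + 1) * n.factorial := by
    rw [Nat.factorial_succ]; push_cast; ring
  have hl : ((n : ℝ) + 1) * (2 * (iteratedDeriv n (FF (s : ℕ) (G : ℕ)) 0
      - iteratedDeriv n (FF (s + 1 : ℕ) (G + 1 : ℕ)) 0)) / ((n + 1).factorial : ℝ) =
      2 * (iteratedDeriv n (FF (s : ℕ) (G : ℕ)) 0 / n.factorial)
      - 2 * (iteratedDeriv n (FF (s + 1 : ℕ) (G + 1 : ℕ)) 0 / n.factorial) := by
    rw [hfac]
    have : (n : ℝ) + 1 ≠ 0 := by positivity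
    field_simp
  rw [hl, k1, k2]
  ring
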